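/- arXiv:1011.3643 — 2 statements merged into one kernel-verified Lean document; each statement's English description precedes it below -/
import Mathlib

section
/- Let λ > 0, μ > 0, θ ∈ ℝ, let p ∈ ℝ⁴ be nonzero, and let y : ℝ → ℝ be a twice differentiable function satisfying y''(u) = -2 y(u)³ for all u and not identically zero. Then the function φ(x) := μ (2/λ)^{1/4} y(p·x + θ) satisfies □φ + λ φ³ = 0 on ℝ⁴ if and only if the dispersion relation p² = μ²√(λ/2) holds, where p² := p₀² − p₁² − p₂² − p₃² is the Minkowski square. In other words, the only effect of the nonlinearity on this exact wave is to generate the mass relation of a massive free particle. -/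
/-!
On a plane wave `f (p·x + θ)` the operator `□` acts as multiplication of `f''` by `p²`. If
`f'' = c g(f)`, then `□φ + λ g(φ) = (c p² + λ) g(φ)`, and since `p ≠ 0` the phase takes every real
value, so this vanishes identically iff `c p² + λ = 0`. Rescaling `y'' = -2 y³` to `f = A y` gives
`g(s) = s³` with `c = -2 / A²`, whence `p² = λ A² / 2`, which is `μ² √(λ/2)` for
`A = μ (2/λ)^(1/4)`.
-/

open Real

/-- Minkowski inner product on `ℝ⁴` with signature `(+,−,−,−)`. -/
def mink (p x : Fin 4 → ℝ) : ℝ :=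
  p 0 * x 0 - p 1 * x 1 - p 2 * x 2 - p 3 * x 3

/-- Second partial derivative of `f : (Fin 4 → ℝ) → ℝ` along the `i`-th coordinate at `x`. -/
noncomputable def d2 (i : Fin 4) (f : (Fin 4 → ℝ) → ℝ) (x : Fin 4 → ℝ) : ℝ :=
  deriv (deriv fun t => f (Function.update x i t)) (x i)

/-- The diagonal entries `(1, -1, -1, -1)` of the Minkowski metric; the phase `p·x` has
slope `minkSign i * p i` along the `i`-th coordinate. -/
def minkSign : Fin 4 → ℝ := ![1, -1, -1, -1]

/-- The d'Alembertian `□ = ∂₀² - ∂₁² - ∂₂² - ∂₃²`, built from the coordinate derivatives `d2`. -/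
noncomputable def dAlembertian (φ : (Fin 4 → ℝ) → ℝ) (x : Fin 4 → ℝ) : ℝ :=
  d2 0 φ x - d2 1 φ x - d2 2 φ x - d2 3 φ x

lemma minkSign_sq (i : Fin 4) : minkSign i ^ 2 = 1 := by
  fin_cases i <;> simp [minkSign]

lemma mink_eq_dotProduct (p x : Fin 4 → ℝ) : mink p x = (minkSign * p) ⬝ᵥ x := by
  simp only [mink, minkSign, dotProduct, Fin.sum_univ_four, Pi.mul_apply, Matrix.cons_val]
  ring

lemma mink_update (p x : Fin 4 → ℝ) (i : Fin 4) (t : ℝ) :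
    mink p (Function.update x i t) = mink p x + minkSign i * p i * (t - x i) := by
  simp only [mink_eq_dotProduct, Pi.update_eq_sub_add_single, dotProduct_add, dotProduct_sub,
    dotProduct_single, Pi.mul_apply]
  ring

lemma mink_surjective {p : Fin 4 → ℝ} (hp : p ≠ 0) : Function.Surjective (mink p) := by
  intro s
  obtain ⟨i, hi⟩ := Function.ne_iff.mp hp
  have minkSign_ne_zero : minkSign i ≠ 0 := by
    rw [← sq_pos_iff, minkSign_sq]
    exact one_pos
  use Pi.single i (s / (minkSign i * p i))
  rw [mink_eq_dotProduct, dotProduct_single, Pi.mul_apply,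
    mul_div_cancel₀ s (mul_ne_zero minkSign_ne_zero hi)]

section Affine

variable {𝕜 : Type*} [NontriviallyNormedField 𝕜] (f : 𝕜 → 𝕜) (a b : 𝕜)

lemma deriv_comp_affine :
    deriv (fun t => f (a * t + b)) = fun t => a * deriv f (a * t + b) := by
  funext t
  rw [deriv_comp_mul_left a (fun u => f (u + b)), deriv_comp_add_const, smul_eq_mul]

lemma deriv_deriv_comp_affine (t : 𝕜) :
    deriv (deriv fun t => f (a * t + b)) t = a ^ 2 * deriv (deriv f) (a * t + b) := by
  rw [deriv_comp_affine, deriv_const_mul_field, deriv_comp_affine, sq, mul_assoc]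

end Affine

section PlaneWave

variable (f : ℝ → ℝ) (p : Fin 4 → ℝ) (θ : ℝ)

lemma d2_planeWave (i : Fin 4) (x : Fin 4 → ℝ) :
    d2 i (fun x' => f (mink p x' + θ)) x = p i ^ 2 * deriv (deriv f) (mink p x + θ) := by
  have phase_affine (t : ℝ) : mink p (Function.update x i t) + θ
      = minkSign i * p i * t + (mink p x + θ - minkSign i * p i * x i) := by
    rw [mink_update]
    ring
  simp only [d2, phase_affine]
  rw [deriv_deriv_comp_affine, mul_pow, minkSign_sq, one_mul, add_sub_cancel]

lemma dAlembertian_planeWave (x : Fin 4 → ℝ) :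
    dAlembertian (fun x' => f (mink p x' + θ)) x
      = mink p p * deriv (deriv f) (mink p x + θ) := by
  simp only [dAlembertian, d2_planeWave]
  unfold mink
  ring

variable {f p}

lemma dAlembertian_planeWave_add_eq_zero_iff (g : ℝ → ℝ) (c κ : ℝ) (hp : p ≠ 0)
    (hf : ∀ u, deriv (deriv f) u = c * g (f u)) (hgf : ∃ u, g (f u) ≠ 0) :
    (∀ x, dAlembertian (fun x' => f (mink p x' + θ)) x + κ * g (f (mink p x + θ)) = 0)
      ↔ c * mink p p + κ = 0 := by
  have factor (x : Fin 4 → ℝ) :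
      dAlembertian (fun x' => f (mink p x' + θ)) x + κ * g (f (mink p x + θ))
        = (c * mink p p + κ) * g (f (mink p x + θ)) := by
    rw [dAlembertian_planeWave, hf]
    ring
  simp only [factor]
  constructor
  · intro h
    obtain ⟨u, hu⟩ := hgf
    obtain ⟨x, hx⟩ := mink_surjective hp (u - θ)
    have vanishes_at_x := h x
    rw [hx, sub_add_cancel] at vanishes_at_x
    exact (mul_eq_zero.mp vanishes_at_x).resolve_right hu
  · intro h x
    rw [h, zero_mul]

end PlaneWave

lemma deriv_deriv_const_mul_of_cubic {y : ℝ → ℝ} {A c : ℝ} (hA : A ≠ 0)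
    (hy : ∀ u, deriv (deriv y) u = c * y u ^ 3) (u : ℝ) :
    deriv (deriv fun u => A * y u) u = c / A ^ 2 * (A * y u) ^ 3 := by
  rw [deriv_const_mul_field', deriv_const_mul_field, hy]
  field_simp

lemma rpow_one_div_four_sq {r : ℝ} (hr : 0 ≤ r) : (r ^ ((1 : ℝ) / 4)) ^ 2 = √r := by
  rw [← rpow_mul_natCast hr, sqrt_eq_rpow]
  norm_num

lemma mul_sqrt_two_div (r : ℝ) : r * √(2 / r) = 2 * √(r / 2) := by
  calc r * √(2 / r) = 2 * (r / 2 / √(r / 2)) := by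
        rw [← inv_div r 2, sqrt_inv]
        ring
    _ = 2 * √(r / 2) := by rw [div_sqrt]

/-- For `p ≠ 0` and `y` a nontrivial solution of `y'' = -2y³`, the wave
`φ(x) = μ (2/λ)^{1/4} y(p·x + θ)` solves `□φ + λφ³ = 0` on `ℝ⁴` if and only if
the dispersion relation `p² = μ²√(λ/2)` holds. -/
theorem stmt_1 (lam mu θ : ℝ) (hlam : 0 < lam) (hmu : 0 < mu)
    (p : Fin 4 → ℝ) (hp : p ≠ 0) (y : ℝ → ℝ)
    (hy1 : Differentiable ℝ y) (hy2 : Differentiable ℝ (deriv y))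
    (hode : ∀ u : ℝ, deriv (deriv y) u = -2 * (y u) ^ 3)
    (hy0 : ∃ u : ℝ, y u ≠ 0) :
    (∀ x : Fin 4 → ℝ,
      (d2 0 (fun x' => mu * (2 / lam) ^ ((1 : ℝ) / 4) * y (mink p x' + θ)) x
        - d2 1 (fun x' => mu * (2 / lam) ^ ((1 : ℝ) / 4) * y (mink p x' + θ)) x
        - d2 2 (fun x' => mu * (2 / lam) ^ ((1 : ℝ) / 4) * y (mink p x' + θ)) x
        - d2 3 (fun x' => mu * (2 / lam) ^ ((1 : ℝ) / 4) * y (mink p x' + θ)) x)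
        + lam * (mu * (2 / lam) ^ ((1 : ℝ) / 4) * y (mink p x + θ)) ^ 3 = 0)
    ↔ mink p p = mu ^ 2 * Real.sqrt (lam / 2) := by
  set A := mu * (2 / lam) ^ ((1 : ℝ) / 4)
  have A_ne_zero : A ≠ 0 := by positivity
  have amplitude : lam * A ^ 2 = 2 * (mu ^ 2 * √(lam / 2)) := by
    rw [mul_pow, rpow_one_div_four_sq (by positivity), mul_left_comm, mul_sqrt_two_div]
    ring
  have wave_ne_zero : ∃ u, (A * y u) ^ 3 ≠ 0 :=
    hy0.imp fun _ hu => pow_ne_zero 3 (mul_ne_zero A_ne_zero hu)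
  refine (dAlembertian_planeWave_add_eq_zero_iff θ (· ^ 3) (-2 / A ^ 2) lam hp
    (deriv_deriv_const_mul_of_cubic A_ne_zero hode) wave_ne_zero).trans ?_
  calc -2 / A ^ 2 * mink p p + lam = 0 ↔ 2 * mink p p = lam * A ^ 2 := by
        field_simp
        constructor <;> intro h <;> linarith
    _ ↔ mink p p = mu ^ 2 * √(lam / 2) := by
        rw [amplitude, mul_right_inj' two_ne_zero]
end

section
/- Let y : ℝ → ℝ be the solution of the initial value problem y'' = −2y³, y(0) = 0, y'(0) = 1. Then y is periodic with period 4K, where K := ∫₀¹ ds/√(1 − s⁴), and the maximum value of |y| equals 1 (attained, e.g., at t = K). (This identifies y with the Jacobi elliptic function sn(·, i), whose quarter period is the complete elliptic integral K(i) ≈ 1.3111028777.) -/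
/-!
The energy `y'² + y⁴ = 1` bounds `|y|` by `1`. The force `-2y³` brings the velocity down to a first
zero at some time `T`, where the energy gives `y T = 1`. On `(0, T)` the energy reads
`y' = √(1 - y⁴)`, so separation of variables gives `T = K`.

The force is odd, so by uniqueness of solutions the motion is symmetric under reflection in time
about `T`, where the velocity vanishes, and antisymmetric about `0`, where the position vanishes.
The composite of the two reflections is the translation by `2T`, under which `y` changes sign.
-/

open Real

/-- The complete elliptic integral `K(i) = ∫₀¹ ds/√(1 − s⁴)`. -/
noncomputable def Kell : ℝ := ∫ s in (0:ℝ)..1, 1 / Real.sqrt (1 - s ^ 4)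

open Set Function

section Calculus

/-- A Lipschitz constant is only needed on the compact set swept out by the two solutions between
`a` and the time considered. -/
theorem eq_of_hasDerivAt_of_locallyLipschitz {E : Type*} [NormedAddCommGroup E] [NormedSpace ℝ E]
    {v : E → E} {x z : ℝ → E} {a : ℝ} (hv : LocallyLipschitz v)
    (hx : ∀ t, HasDerivAt x (v (x t)) t) (hz : ∀ t, HasDerivAt z (v (z t)) t)
    (ha : x a = z a) : x = z := by
  ext t
  obtain ⟨l, r, hal, hat⟩ : ∃ l r, a ∈ Ioo l r ∧ t ∈ Ioo l r :=
    ⟨min a t - 1, max a t + 1, by grind⟩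
  have hxc : Continuous x := continuous_iff_continuousAt.mpr fun s => (hx s).continuousAt
  have hzc : Continuous z := continuous_iff_continuousAt.mpr fun s => (hz s).continuousAt
  have hS : IsCompact (x '' Icc l r ∪ z '' Icc l r) :=
    (isCompact_Icc.image hxc).union (isCompact_Icc.image hzc)
  obtain ⟨K, hK⟩ := hv.locallyLipschitzOn.exists_lipschitzOnWith_of_compact hS
  exact ODE_solution_unique_of_mem_Ioo (v := fun _ => v) (fun _ _ => hK) hal
    (fun s hs => ⟨hx s, .inl (mem_image_of_mem x (Ioo_subset_Icc_self hs))⟩)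
    (fun s hs => ⟨hz s, .inr (mem_image_of_mem z (Ioo_subset_Icc_self hs))⟩) ha hat

theorem exists_first_zero_of_continuousOn {g : ℝ → ℝ} {a b : ℝ} (hab : a ≤ b)
    (hg : ContinuousOn g (Icc a b)) (ha : 0 < g a) (hb : g b ≤ 0) :
    ∃ c ∈ Ioc a b, g c = 0 ∧ ∀ t ∈ Ico a c, 0 < g t := by
  have hS : IsCompact (Icc a b ∩ g ⁻¹' Iic 0) :=
    isCompact_Icc.of_isClosed_subset (hg.preimage_isClosed_of_isClosed isClosed_Icc isClosed_Iic)
      inter_subset_left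
  obtain ⟨c, ⟨hc, hgc⟩, hleast⟩ := hS.exists_isLeast ⟨b, ⟨hab, le_rfl⟩, hb⟩
  have hpos : ∀ t ∈ Ico a c, 0 < g t := fun t ht =>
    not_le.mp fun h => ht.2.not_ge (hleast ⟨⟨ht.1, ht.2.le.trans hc.2⟩, h⟩)
  obtain ⟨s, hs, hgs⟩ :=
    intermediate_value_Icc' hc.1 (hg.mono (Icc_subset_Icc_right hc.2)) ⟨hgc, ha.le⟩
  have hsc : s = c := hs.2.eq_of_not_lt fun h => (hpos s ⟨hs.1, h⟩).ne' hgs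
  have hac : a ≠ c := by
    rintro rfl
    exact ha.not_ge hgc
  exact ⟨c, ⟨hc.1.lt_of_ne hac, hc.2⟩, hsc ▸ hgs, hpos⟩

theorem exists_nonpos_of_hasDerivAt_le_neg {g g' : ℝ → ℝ} {a C : ℝ} (hC : C < 0)
    (hg : ∀ t ∈ Ici a, HasDerivAt g (g' t) t) (hg' : ∀ t ∈ Ici a, g' t ≤ C) :
    ∃ b, a ≤ b ∧ g b ≤ 0 := by
  by_contra! hpos
  have hdecay : ∀ t ∈ Ici a, g t - g a ≤ C * (t - a) := fun t ht =>
    (convex_Ici a).image_sub_le_mul_sub_of_deriv_le (HasDerivAt.continuousOn hg)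
      (fun s hs => (hg s (interior_subset hs)).differentiableAt.differentiableWithinAt)
      (fun s hs => (hg s (interior_subset hs)).deriv ▸ hg' s (interior_subset hs))
      a self_mem_Ici t ht ht
  have hb : a ≤ a + g a / -C :=
    le_add_of_nonneg_right (div_nonneg (hpos a le_rfl).le (neg_pos.mpr hC).le)
  have hdrop : C * (a + g a / -C - a) = -g a := by
    rw [add_sub_cancel_left, div_neg, mul_neg, mul_div_cancel₀ _ hC.ne]
  linarith [hdecay _ hb, hpos _ hb]

theorem integral_one_div_eq_sub_of_hasDerivAt {v y : ℝ → ℝ} {a b : ℝ} (hab : a ≤ b)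
    (hy : ContinuousOn y (Icc a b)) (hderiv : ∀ t ∈ Ioo a b, HasDerivAt y (v (y t)) t)
    (hv : ∀ t ∈ Ioo a b, 0 < v (y t)) :
    ∫ s in y a..y b, 1 / v s = b - a := by
  have hmono : StrictMonoOn y (Icc a b) := by
    refine strictMonoOn_of_deriv_pos (convex_Icc a b) hy fun t ht => ?_
    rw [interior_Icc] at ht
    exact (hderiv t ht).deriv ▸ hv t ht
  have hle : y a ≤ y b := hmono.monotoneOn ⟨le_rfl, hab⟩ ⟨hab, le_rfl⟩ hab
  calc ∫ s in y a..y b, 1 / v s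
      = ∫ s in Icc (y a) (y b), 1 / v s := by
        rw [intervalIntegral.integral_of_le hle, MeasureTheory.integral_Icc_eq_integral_Ioc]
    _ = ∫ t in Icc a b, v (y t) • (1 / v (y t)) :=
        (MeasureTheory.integral_Icc_deriv_smul_of_deriv_nonneg hy hderiv
          (fun t ht => (hv t ht).le) hab).symm
    _ = ∫ _ in Ioo a b, (1 : ℝ) := by
        rw [MeasureTheory.integral_Icc_eq_integral_Ioo]
        exact MeasureTheory.setIntegral_congr_fun measurableSet_Ioo fun t ht =>
          mul_one_div_cancel (hv t ht).ne'
    _ = b - a := by simp [hab]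

end Calculus

/-- A solution of Newton's equation `y'' = f(y)` on the whole time axis, given as the pair of the
position `y` and the velocity `p = y'`. -/
structure IsNewtonTrajectory {E : Type*} [NormedAddCommGroup E] [NormedSpace ℝ E]
    (f : E → E) (y p : ℝ → E) : Prop where
  hasDerivAt_position : ∀ t, HasDerivAt y (p t) t
  hasDerivAt_velocity : ∀ t, HasDerivAt p (f (y t)) t

namespace IsNewtonTrajectory

section Symmetry

variable {E : Type*} [NormedAddCommGroup E] [NormedSpace ℝ E] {f : E → E} {y p z q : ℝ → E}

theorem eq_of_eq_at {a : ℝ} (hf : LocallyLipschitz f) (hy : IsNewtonTrajectory f y p)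
    (hz : IsNewtonTrajectory f z q) (hyz : y a = z a) (hpq : p a = q a) : y = z := by
  have hfield : LocallyLipschitz fun x : E × E => (x.2, f x.1) :=
    LipschitzWith.prod_snd.locallyLipschitz.prodMk
      (hf.comp LipschitzWith.prod_fst.locallyLipschitz)
  have hphase : (fun t => (y t, p t)) = fun t => (z t, q t) :=
    eq_of_hasDerivAt_of_locallyLipschitz hfield
      (fun t => (hy.hasDerivAt_position t).prodMk (hy.hasDerivAt_velocity t))
      (fun t => (hz.hasDerivAt_position t).prodMk (hz.hasDerivAt_velocity t))
      (Prod.ext hyz hpq)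
  exact funext fun t => congrArg Prod.fst (congrFun hphase t)

theorem comp_const_sub (h : IsNewtonTrajectory f y p) (c : ℝ) :
    IsNewtonTrajectory f (fun t => y (c - t)) (fun t => -p (c - t)) where
  hasDerivAt_position t := (h.hasDerivAt_position (c - t)).comp_const_sub c t
  hasDerivAt_velocity t := by
    simpa only [neg_neg] using ((h.hasDerivAt_velocity (c - t)).comp_const_sub c t).fun_neg

theorem neg (hodd : f.Odd) (h : IsNewtonTrajectory f y p) :
    IsNewtonTrajectory f (fun t => -y t) (fun t => -p t) where
  hasDerivAt_position t := (h.hasDerivAt_position t).fun_neg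
  hasDerivAt_velocity t := hodd (y t) ▸ (h.hasDerivAt_velocity t).fun_neg

theorem reflect_of_velocity_eq_zero {b : ℝ} (hf : LocallyLipschitz f)
    (h : IsNewtonTrajectory f y p) (hb : p b = 0) (t : ℝ) : y (2 * b - t) = y t := by
  have hfix : 2 * b - b = b := by ring
  exact congrFun
    ((h.comp_const_sub (2 * b)).eq_of_eq_at (a := b) hf h (by rw [hfix]) (by simp [hfix, hb])) t

theorem reflect_of_position_eq_zero {a : ℝ} (hf : LocallyLipschitz f) (hodd : f.Odd)
    (h : IsNewtonTrajectory f y p) (ha : y a = 0) (t : ℝ) : y (2 * a - t) = -y t := by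
  have hfix : 2 * a - a = a := by ring
  exact congrFun ((h.comp_const_sub (2 * a)).eq_of_eq_at (a := a) hf (h.neg hodd)
    (by simp [hfix, ha]) (by rw [hfix])) t

theorem antiperiodic {a b : ℝ} (hf : LocallyLipschitz f) (hodd : f.Odd)
    (h : IsNewtonTrajectory f y p) (ha : y a = 0) (hb : p b = 0) :
    Antiperiodic y (2 * (b - a)) := fun t => by
  calc y (t + 2 * (b - a)) = y (2 * b - (2 * a - t)) := by ring_nf
    _ = y (2 * a - t) := h.reflect_of_velocity_eq_zero hf hb _
    _ = -y t := h.reflect_of_position_eq_zero hf hodd ha t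

end Symmetry

section OneDimensional

variable {f y p : ℝ → ℝ}

theorem energy_eq {V : ℝ → ℝ} (h : IsNewtonTrajectory f y p) (hV : ∀ x, HasDerivAt V (-f x) x)
    (s t : ℝ) : p s ^ 2 / 2 + V (y s) = p t ^ 2 / 2 + V (y t) := by
  have hderiv : ∀ t, HasDerivAt (fun t => p t ^ 2 / 2 + V (y t)) 0 t := fun t =>
    ((((h.hasDerivAt_velocity t).fun_pow 2).div_const 2).add
      ((hV (y t)).comp t (h.hasDerivAt_position t))).congr_deriv (by ring)
  exact is_const_of_deriv_eq_zero (fun t => (hderiv t).differentiableAt)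
    (fun t => (hderiv t).deriv) s t

theorem strictMonoOn_of_velocity_pos {D : Set ℝ} (h : IsNewtonTrajectory f y p)
    (hD : Convex ℝ D) (hp : ∀ t ∈ interior D, 0 < p t) : StrictMonoOn y D :=
  strictMonoOn_of_hasDerivWithinAt_pos hD
    (HasDerivAt.continuousOn fun t _ => h.hasDerivAt_position t)
    (fun t _ => (h.hasDerivAt_position t).hasDerivWithinAt) hp

/-- Otherwise the position would increase forever, so that from time `a + 1` on the acceleration
would stay below the constant `f (y (a + 1)) < 0`. -/
theorem exists_velocity_nonpos {a : ℝ} (h : IsNewtonTrajectory f y p)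
    (hanti : AntitoneOn f (Ioi 0)) (hneg : ∀ x, 0 < x → f x < 0) (ha : 0 ≤ y a) :
    ∃ b, a ≤ b ∧ p b ≤ 0 := by
  by_contra! hpos
  have hmono : StrictMonoOn y (Ici a) :=
    h.strictMonoOn_of_velocity_pos (convex_Ici a) fun t ht => hpos t (interior_subset ht)
  have hy : 0 < y (a + 1) := ha.trans_lt (hmono self_mem_Ici (by simp) (by simp))
  obtain ⟨b, hb, hpb⟩ := exists_nonpos_of_hasDerivAt_le_neg (hneg _ hy)
    (fun t _ => h.hasDerivAt_velocity t) fun t (ht : a + 1 ≤ t) => by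
      have hyt : y (a + 1) ≤ y t := hmono.monotoneOn (by simp) (mem_Ici.mpr (by linarith)) ht
      exact hanti hy (hy.trans_le hyt) hyt
  exact (hpos b (by linarith)).not_ge hpb

theorem exists_turning_time {a : ℝ} (h : IsNewtonTrajectory f y p)
    (hanti : AntitoneOn f (Ioi 0)) (hneg : ∀ x, 0 < x → f x < 0) (ha : 0 ≤ y a) (hpa : 0 < p a) :
    ∃ T, a < T ∧ p T = 0 ∧ ∀ t ∈ Ico a T, 0 < p t := by
  obtain ⟨b, hab, hpb⟩ := h.exists_velocity_nonpos hanti hneg ha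
  obtain ⟨T, hT, hpT, hpos⟩ := exists_first_zero_of_continuousOn hab
    (HasDerivAt.continuousOn fun t _ => h.hasDerivAt_velocity t) hpa hpb
  exact ⟨T, hT.1, hpT, hpos⟩

end OneDimensional

end IsNewtonTrajectory

/-- The force `-2x³`, for which Newton's equation is the equation of `sn(·, i)`. -/
def quarticForce (x : ℝ) : ℝ := -2 * x ^ 3

theorem locallyLipschitz_quarticForce : LocallyLipschitz quarticForce := by
  have hsmooth : ContDiff ℝ 1 quarticForce := by
    unfold quarticForce
    fun_prop
  exact hsmooth.locallyLipschitz

theorem odd_quarticForce : quarticForce.Odd := fun x => by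
  simp only [quarticForce]
  ring

theorem antitone_quarticForce : Antitone quarticForce := fun x z hxz =>
  mul_le_mul_of_nonpos_left ((Odd.strictMono_pow (by decide)).monotone hxz) (by norm_num)

theorem quarticForce_neg {x : ℝ} (hx : 0 < x) : quarticForce x < 0 :=
  mul_neg_of_neg_of_pos (by norm_num) (by positivity)

namespace IsNewtonTrajectory

variable {y p : ℝ → ℝ}

theorem quartic_energy_eq_one (h : IsNewtonTrajectory quarticForce y p) (h0 : y 0 = 0)
    (h1 : p 0 = 1) (t : ℝ) : p t ^ 2 + y t ^ 4 = 1 := by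
  have hV : ∀ x : ℝ, HasDerivAt (fun x => x ^ 4 / 2) (-quarticForce x) x := fun x =>
    ((hasDerivAt_pow 4 x).div_const 2).congr_deriv (by
      simp only [quarticForce, Nat.cast_ofNat]
      ring)
  have henergy : p t ^ 2 / 2 + y t ^ 4 / 2 = 1 ^ 2 / 2 + 0 ^ 4 / 2 := h0 ▸ h1 ▸ h.energy_eq hV t 0
  linarith

theorem quartic_abs_le_one (h : IsNewtonTrajectory quarticForce y p) (h0 : y 0 = 0)
    (h1 : p 0 = 1) (t : ℝ) : |y t| ≤ 1 := by
  have hpow : |y t| ^ 4 ≤ 1 := by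
    rw [Even.pow_abs (by decide)]
    linarith [h.quartic_energy_eq_one h0 h1 t, sq_nonneg (p t)]
  exact (pow_le_one_iff_of_nonneg (abs_nonneg _) four_ne_zero).mp hpow

theorem quartic_position_eq_one {T : ℝ} (h : IsNewtonTrajectory quarticForce y p) (h0 : y 0 = 0)
    (h1 : p 0 = 1) (hT : 0 < T) (hpT : p T = 0) (hpos : ∀ t ∈ Ico 0 T, 0 < p t) : y T = 1 := by
  have hmono : StrictMonoOn y (Icc 0 T) := h.strictMonoOn_of_velocity_pos (convex_Icc 0 T)
    fun t ht => hpos t (Ioo_subset_Ico_self (interior_Icc.subset ht))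
  have hyT : 0 < y T := h0 ▸ hmono ⟨le_rfl, hT.le⟩ ⟨hT.le, le_rfl⟩ hT
  have hpow : y T ^ 4 = 1 := by simpa [hpT] using h.quartic_energy_eq_one h0 h1 T
  exact (pow_eq_one_iff_of_nonneg hyT.le four_ne_zero).mp hpow

theorem quartic_velocity_eq_sqrt {t : ℝ} (h : IsNewtonTrajectory quarticForce y p) (h0 : y 0 = 0)
    (h1 : p 0 = 1) (hp : 0 ≤ p t) : p t = √(1 - y t ^ 4) := by
  rw [← h.quartic_energy_eq_one h0 h1 t, add_sub_cancel_right, sqrt_sq hp]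

theorem Kell_eq {T : ℝ} (h : IsNewtonTrajectory quarticForce y p) (h0 : y 0 = 0) (h1 : p 0 = 1)
    (hT : 0 < T) (hyT : y T = 1) (hpos : ∀ t ∈ Ico 0 T, 0 < p t) : Kell = T := by
  have hspeed : ∀ t ∈ Ioo 0 T, p t = √(1 - y t ^ 4) := fun t ht =>
    h.quartic_velocity_eq_sqrt h0 h1 (hpos t (Ioo_subset_Ico_self ht)).le
  have hintegral : ∫ s in y 0..y T, 1 / √(1 - s ^ 4) = T - 0 :=
    integral_one_div_eq_sub_of_hasDerivAt hT.le
      (HasDerivAt.continuousOn fun t _ => h.hasDerivAt_position t)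
      (fun t ht => hspeed t ht ▸ h.hasDerivAt_position t)
      (fun t ht => hspeed t ht ▸ hpos t (Ioo_subset_Ico_self ht))
  rwa [h0, hyT, sub_zero] at hintegral

theorem quartic_at_Kell (h : IsNewtonTrajectory quarticForce y p) (h0 : y 0 = 0)
    (h1 : p 0 = 1) : y Kell = 1 ∧ p Kell = 0 := by
  obtain ⟨T, hT, hpT, hpos⟩ := h.exists_turning_time (antitone_quarticForce.antitoneOn _)
    (fun _ => quarticForce_neg) h0.ge (h1 ▸ one_pos)
  have hyT : y T = 1 := h.quartic_position_eq_one h0 h1 hT hpT hpos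
  exact h.Kell_eq h0 h1 hT hyT hpos ▸ ⟨hyT, hpT⟩

end IsNewtonTrajectory

/-- The solution of `y'' = -2y³`, `y 0 = 0`, `y' 0 = 1` (i.e. the Jacobi elliptic
function `sn(·, i)`) is periodic with period `4K`, where `K = ∫₀¹ ds/√(1 − s⁴)`,
and the maximum value of `|y|` equals `1`, attained at `t = K`. -/
theorem stmt_3 (y : ℝ → ℝ)
    (hy1 : Differentiable ℝ y) (hy2 : Differentiable ℝ (deriv y))
    (hode : ∀ u : ℝ, deriv (deriv y) u = -2 * (y u) ^ 3)
    (h0 : y 0 = 0) (h1 : deriv y 0 = 1) :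
    (∀ t : ℝ, y (t + 4 * Kell) = y t) ∧ (∀ t : ℝ, |y t| ≤ 1) ∧ y Kell = 1 := by
  have h : IsNewtonTrajectory quarticForce y (deriv y) :=
    ⟨fun t => (hy1 t).hasDerivAt, fun t => (hy2 t).hasDerivAt.congr_deriv (hode t)⟩
  obtain ⟨hyK, hpK⟩ := h.quartic_at_Kell h0 h1
  have hanti : Antiperiodic y (2 * (Kell - 0)) :=
    h.antiperiodic locallyLipschitz_quarticForce odd_quarticForce h0 hpK
  have hperiod : 2 * (2 * (Kell - 0)) = 4 * Kell := by ring
  exact ⟨hperiod ▸ hanti.periodic_two_mul, h.quartic_abs_le_one h0 h1, hyK⟩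
end
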